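/- Let H ∈ (0,1) and let W^H be the law of fractional Brownian motion with Hurst parameter H. Then for W^H-almost every ω̄ ∈ Ω, the local order of W^H at ω̄ (for the uniform norm) exists and equals 1/H. -/

import Mathlib

open scoped ENNReal NNReal Topology
open Filter MeasureTheory Metric Set

noncomputable section

namespace Multifractal


/-- The `δ`-level Hausdorff pre-measure `H^h_δ` associated to a gauge `h`. -/
def hMeasAux {X : Type*} [MetricSpace X] (h : ℝ → ℝ) (δ : ℝ≥0∞) (E : Set X) : ℝ≥0∞ :=
  ⨅ (c : ℕ → X) (r : ℕ → ℝ) (_ : ∀ n, 0 < r n ∧ ENNReal.ofReal (r n) ≤ δ)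
    (_ : E ⊆ ⋃ n, Metric.ball (c n) (r n)), ∑' n, ENNReal.ofReal (h (r n))

/-- The `h`-Hausdorff measure. -/
def hMeas {X : Type*} [MetricSpace X] (h : ℝ → ℝ) (E : Set X) : ℝ≥0∞ :=
  ⨆ (δ : ℝ≥0∞) (_ : 0 < δ), hMeasAux h δ E

/-- `Ω`: continuous paths on `[0,1]` vanishing at `0`, with the uniform metric. -/
abbrev PathSpace : Type := {f : C(unitInterval, ℝ) // f 0 = 0}

instance : MeasurableSpace PathSpace := borel PathSpace
instance : BorelSpace PathSpace := ⟨rfl⟩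

/-- `μ` is a centered Gaussian process measure on path space with covariance `K`:
a probability measure under which every finite linear combination of coordinates
is a centered real Gaussian with the variance given by `K`. -/
def IsGaussianProcess (μ : Measure PathSpace) (K : unitInterval → unitInterval → ℝ) : Prop :=
  IsProbabilityMeasure μ ∧
  ∀ (n : ℕ) (t : Fin n → unitInterval) (c : Fin n → ℝ),
    Measure.map (fun ω : PathSpace => ∑ i, c i * ω.1 (t i)) μ =
      ProbabilityTheory.gaussianReal 0
        (Real.toNNReal (∑ i, ∑ j, c i * c j * K (t i) (t j)))

/-- `W` is the Wiener measure: the coordinate process is centered Gaussian with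
covariance `min s t`. -/
def IsWienerMeasure (W : Measure PathSpace) : Prop :=
  IsGaussianProcess W (fun s t => min (s : ℝ) (t : ℝ))

/-- `μ` is the law of fractional Brownian motion with Hurst parameter `H`. -/
def IsFBM (H : ℝ) (μ : Measure PathSpace) : Prop :=
  IsGaussianProcess μ (fun s t =>
    ((s : ℝ) ^ (2*H) + (t : ℝ) ^ (2*H) - |(t : ℝ) - (s : ℝ)| ^ (2*H)) / 2)

/-- Clamping of a real number into the unit interval. -/
def clampI (t : ℝ) : unitInterval :=
  ⟨min (max t 0) 1, Set.mem_Icc.mpr ⟨le_min (le_max_right _ _) zero_le_one, min_le_right _ _⟩⟩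

/-- The grid point `j/n` of the unit interval. -/
def gridPt (n j : ℕ) : unitInterval := clampI ((j : ℝ) / n)

/-- The discrete quadratic variation `Q_n(ω)`. -/
def Qvar (ω : PathSpace) (n : ℕ) : ℝ :=
  Real.sqrt ((1 / (n : ℝ)) *
    ∑ i ∈ Finset.range n, (ω.1 (gridPt n (i+1)) - ω.1 (gridPt n i)) ^ 2)

/-- Lower Orey exponent `q^-(ω)`. -/
def oreyLower (ω : PathSpace) : EReal :=
  liminf (fun n : ℕ => ((-Real.log (Qvar ω n) / Real.log n : ℝ) : EReal)) atTop

/-- Upper Orey exponent `q^+(ω)`. -/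
def oreyUpper (ω : PathSpace) : EReal :=
  limsup (fun n : ℕ => ((-Real.log (Qvar ω n) / Real.log n : ℝ) : EReal)) atTop

/-- The set `C_a` of `a`-Hölder paths. -/
def holderSet (a : ℝ) : Set PathSpace :=
  {ω | ∃ C : ℝ, ∀ x y : unitInterval, |ω.1 x - ω.1 y| ≤ C * |(x : ℝ) - (y : ℝ)| ^ a}

/-- The set `C_a^- = ⋂_{0<b<a} C_b` of nearly `a`-Hölder paths. -/
def holderMinus (a : ℝ) : Set PathSpace := ⋂ b ∈ Set.Ioo (0:ℝ) a, holderSet b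

/-- The set `C_q^crit` of critical `q`-Hölder paths: nearly `q`-Hölder paths whose
Orey exponent exists and equals `q`. -/
def holderCrit (q : ℝ) : Set PathSpace :=
  {ω | ω ∈ holderMinus q ∧ oreyLower ω = (q : EReal) ∧ oreyUpper ω = (q : EReal)}

/-- The set `Ω^crit` of critical Hölder paths. -/
def pathCrit : Set PathSpace := ⋃ q ∈ Set.Ioo (0:ℝ) 1, holderCrit q

/-- The lower local order of a measure `μ` on path space at `ω`. -/
def lowerLocOrd (μ : Measure PathSpace) (ω : PathSpace) : EReal :=
  liminf (fun ε : ℝ =>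
    ((Real.log (-Real.log ((μ (Metric.ball ω ε)).toReal)) / (-Real.log ε) : ℝ) : EReal))
    (𝓝[>] (0:ℝ))

/-- The upper local order of a measure `μ` on path space at `ω`. -/
def upperLocOrd (μ : Measure PathSpace) (ω : PathSpace) : EReal :=
  limsup (fun ε : ℝ =>
    ((Real.log (-Real.log ((μ (Metric.ball ω ε)).toReal)) / (-Real.log ε) : ℝ) : EReal))
    (𝓝[>] (0:ℝ))

/-- The Hausdorff order of a set of paths: `sup {α > 0 : H^{h_α}(A) = ∞}` where
`h_α(ε) = exp(-ε^{-α})`. -/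
def ordH (A : Set PathSpace) : ℝ≥0∞ :=
  ⨆ (α : ℝ) (_ : 0 < α ∧ hMeas (fun ε : ℝ => Real.exp (-(ε ^ (-α)))) A = ∞),
    ENNReal.ofReal α

/-- The level set `E(ξ)` of paths at which the local order of `μ` exists and
equals `ξ`. -/
def levelOrd (μ : Measure PathSpace) (ξ : ℝ) : Set PathSpace :=
  {ω | lowerLocOrd μ ω = (ξ : EReal) ∧ upperLocOrd μ ω = (ξ : EReal)}

/-- The cylinder `C_n(ω̄, ε)` around `ω̄` of depth `n` and radius `ε`. -/
def cylinder (ωb : PathSpace) (n : ℕ) (ε : ℝ) : Set PathSpace :=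
  {ω | ∀ j ∈ Finset.Icc 1 n, |ω.1 (gridPt n j) - ωb.1 (gridPt n j)| ≤ ε}

/-- The affine interpolation `L̄_j` of `ω̄` on `[(j-1)/n, j/n]`, evaluated at `t`. -/
def affInterp (ωb : PathSpace) (n j : ℕ) (t : ℝ) : ℝ :=
  ωb.1 (gridPt n (j-1)) +
    (t - ((j-1 : ℕ) : ℝ) / n) * n * (ωb.1 (gridPt n j) - ωb.1 (gridPt n (j-1)))

/-- The maximal deviation `Δ_n(ω̄)` of `ω̄` from its chords on the `1/n`-grid. -/
def chordDev (ωb : PathSpace) (n : ℕ) : ℝ :=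
  sSup {d : ℝ | ∃ j ∈ Finset.Icc 1 n, ∃ t ∈ Set.Icc (((j-1 : ℕ) : ℝ) / n) ((j : ℝ) / n),
    d = |ωb.1 (clampI t) - affInterp ωb n j t|}

/-- The integrand `(1 - cos (x l)) l ^ (-1 - a)` of the spectral representation of `|x| ^ a`. -/
def cosKernel (a x l : ℝ) : ℝ := (1 - Real.cos (x * l)) * l ^ (-1 - a)

/-- The normalising constant of the spectral representation of `|x| ^ a`. -/
def cosConst (a : ℝ) : ℝ := ∫ l in Ioi (0:ℝ), cosKernel a 1 l

lemma cosKernel_nonneg (a x : ℝ) {l : ℝ} (hl : 0 < l) : 0 ≤ cosKernel a x l :=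
  mul_nonneg (by linarith [Real.cos_le_one (x * l)]) (Real.rpow_nonneg hl.le _)

lemma integrableOn_cosKernel {a : ℝ} (ha : 0 < a) (ha2 : a < 2) (x : ℝ) :
    IntegrableOn (cosKernel a x) (Ioi 0) := by
  have hmeas : Measurable (cosKernel a x) := by
    unfold cosKernel; fun_prop
  rw [← Ioc_union_Ioi_eq_Ioi (zero_le_one : (0:ℝ) ≤ 1)]
  refine IntegrableOn.union ?_ ?_
  · have h1 : IntegrableOn (fun l : ℝ => x ^ 2 / 2 * l ^ (1 - a)) (Ioc 0 1) := by
      have := (intervalIntegral.intervalIntegrable_rpow' (a := 0) (b := 1) (r := 1 - a)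
        (by linarith))
      rw [intervalIntegrable_iff_integrableOn_Ioc_of_le zero_le_one] at this
      exact this.const_mul _
    refine Integrable.mono' h1 hmeas.aestronglyMeasurable ?_
    filter_upwards [ae_restrict_mem measurableSet_Ioc] with l hl
    rw [Real.norm_of_nonneg (cosKernel_nonneg a x hl.1)]
    have h2 : l ^ (1 - a) = l ^ 2 * l ^ (-1 - a) := by
      rw [← Real.rpow_natCast, ← Real.rpow_add hl.1]; congr 1; push_cast; ring
    rw [h2, ← mul_assoc]
    refine mul_le_mul_of_nonneg_right ?_ (Real.rpow_nonneg hl.1.le _)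
    have := Real.one_sub_sq_div_two_le_cos (x := x * l)
    nlinarith
  · have h1 : IntegrableOn (fun l : ℝ => 2 * l ^ (-1 - a)) (Ioi 1) :=
      (integrableOn_Ioi_rpow_of_lt (by linarith) one_pos).const_mul _
    refine Integrable.mono' h1 hmeas.aestronglyMeasurable ?_
    filter_upwards [ae_restrict_mem measurableSet_Ioi] with l hl
    have hl0 : 0 < l := lt_trans one_pos hl
    rw [Real.norm_of_nonneg (cosKernel_nonneg a x hl0)]
    refine mul_le_mul_of_nonneg_right ?_ (Real.rpow_nonneg hl0.le _)
    linarith [Real.neg_one_le_cos (x * l)]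

lemma integral_cosKernel {a : ℝ} (ha : 0 < a) (x : ℝ) :
    ∫ l in Ioi (0:ℝ), cosKernel a x l = cosConst a * |x| ^ a := by
  rcases eq_or_ne x 0 with rfl | hx
  · simp [cosKernel, Real.zero_rpow ha.ne']
  have hx' : 0 < |x| := abs_pos.mpr hx
  have h := integral_comp_mul_left_Ioi (fun l => cosKernel a 1 l) 0 hx'
  rw [mul_zero, smul_eq_mul] at h
  have h2 : ∀ l ∈ Ioi (0:ℝ), cosKernel a x l = |x| ^ (1 + a) * cosKernel a 1 (|x| * l) := by
    intro l hl
    have e : Real.cos (1 * (|x| * l)) = Real.cos (x * l) := by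
      rw [one_mul, ← Real.cos_abs (x * l), abs_mul, abs_of_pos (show 0 < l from hl)]
    unfold cosKernel
    rw [e, Real.mul_rpow hx'.le (le_of_lt hl), show (-1 - a) = -(1 + a) by ring,
      Real.rpow_neg hx'.le]
    have := (Real.rpow_pos_of_pos hx' (1 + a)).ne'
    field_simp
  rw [setIntegral_congr_fun measurableSet_Ioi h2, integral_const_mul, h, Real.rpow_add hx',
    Real.rpow_one, cosConst]
  field_simp

lemma cosConst_pos {a : ℝ} (ha : 0 < a) (ha2 : a < 2) : 0 < cosConst a := by
  unfold cosConst
  rw [setIntegral_pos_iff_support_of_nonneg_ae]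
  · refine lt_of_lt_of_le ?_ (measure_mono (?_ : Ioo (0:ℝ) 1 ⊆ _))
    · simp
    · intro l hl
      refine ⟨?_, hl.1⟩
      have h1 : Real.cos (1 * l) < 1 := by
        rw [one_mul, ← Real.cos_zero]
        exact Real.cos_lt_cos_of_nonneg_of_le_pi le_rfl (by linarith [Real.pi_gt_three, hl.2]) hl.1
      exact (mul_pos (by linarith) (Real.rpow_pos_of_pos hl.1 _)).ne'
  · filter_upwards [ae_restrict_mem measurableSet_Ioi] with l hl
    exact cosKernel_nonneg a 1 hl
  · exact integrableOn_cosKernel ha ha2 1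

lemma half_abs_add_abs_sub_eq_zero {r x : ℝ} (hr : 0 < r) (hx : r ≤ |x|) :
    (|x + r| + |x - r|) / 2 - |x| = 0 := by
  rcases le_total 0 x with h | h
  · rw [abs_of_nonneg h] at *
    rw [abs_of_nonneg (by linarith), abs_of_nonneg (by linarith)]; ring
  · rw [abs_of_nonpos h] at *
    rw [abs_of_nonpos (by linarith), abs_of_nonpos (by linarith)]; ring

/-- The second difference `(k (x + r) + k (x - r)) / 2 - k x` of `k = cosKernel 1 · l`; its
integral in `l` is a tent function of `x`. -/
def tentKernel (r x l : ℝ) : ℝ :=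
  (cosKernel 1 (x + r) l + cosKernel 1 (x - r) l) / 2 - cosKernel 1 x l

lemma tentKernel_eq (r x l : ℝ) :
    tentKernel r x l = (1 - Real.cos (r * l)) * l ^ (-1 - 1 : ℝ) * Real.cos (x * l) := by
  unfold tentKernel cosKernel
  rw [add_mul x r, sub_mul x r, Real.cos_add, Real.cos_sub]
  ring

lemma integrableOn_tentKernel (r x : ℝ) : IntegrableOn (tentKernel r x) (Ioi 0) :=
  (((integrableOn_cosKernel one_pos one_lt_two _).add
    (integrableOn_cosKernel one_pos one_lt_two _)).div_const 2).sub
    (integrableOn_cosKernel one_pos one_lt_two _)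

lemma integral_tentKernel (r x : ℝ) :
    ∫ l in Ioi (0:ℝ), tentKernel r x l =
      cosConst 1 * ((|x + r| + |x - r|) / 2 - |x|) := by
  have hi := fun y => integrableOn_cosKernel (a := 1) one_pos one_lt_two y
  unfold tentKernel
  rw [integral_sub (((hi (x + r)).fun_add (hi (x - r))).div_const 2) (hi x), integral_div,
    integral_add (hi _) (hi _)]
  simp only [integral_cosKernel one_pos, Real.rpow_one]
  ring

/-- The integrand of the spectral representation of the variance of `∑ j, u j * B (t j)`. -/
lemma sum_sum_cosKernel {ι : Type*} [Fintype ι] (a : ℝ) (t u : ι → ℝ) (l : ℝ) :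
    ∑ j, ∑ k, u j * u k *
        ((cosKernel a (t j) l + cosKernel a (t k) l - cosKernel a (t k - t j) l) / 2) =
      l ^ (-1 - a) / 2 * ((∑ j, u j * (1 - Real.cos (t j * l))) ^ 2 +
        (∑ j, u j * Real.sin (t j * l)) ^ 2) := by
  rw [sq, sq, Finset.sum_mul_sum, Finset.sum_mul_sum, ← Finset.sum_add_distrib, Finset.mul_sum]
  refine Finset.sum_congr rfl fun j _ => ?_
  rw [← Finset.sum_add_distrib, Finset.mul_sum]
  refine Finset.sum_congr rfl fun k _ => ?_
  unfold cosKernel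
  rw [sub_mul (t k) (t j), Real.cos_sub]
  ring

lemma sum_tentKernel_sub {ι : Type*} [Fintype ι] (t u : ι → ℝ) (r s l : ℝ) :
    ∑ j, u j * (tentKernel r (t j - s) l - tentKernel r (-s) l) =
      (1 - Real.cos (r * l)) * l ^ (-1 - 1 : ℝ) *
        (Real.sin (s * l) * (∑ j, u j * Real.sin (t j * l)) -
          Real.cos (s * l) * (∑ j, u j * (1 - Real.cos (t j * l)))) := by
  rw [Finset.mul_sum, Finset.mul_sum, ← Finset.sum_sub_distrib, Finset.mul_sum]
  refine Finset.sum_congr rfl fun j _ => ?_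
  rw [tentKernel_eq, tentKernel_eq, sub_mul (t j) s, Real.cos_sub, neg_mul, Real.cos_neg]
  ring

lemma mul_sum_tentKernel_le {ι : Type*} [Fintype ι] (a : ℝ) (t u : ι → ℝ) (r s θ : ℝ) {l : ℝ}
    (hl : 0 < l) :
    θ * ∑ j, u j * (tentKernel r (t j - s) l - tentKernel r (-s) l) ≤
      ∑ j, ∑ k, u j * u k *
        ((cosKernel a (t j) l + cosKernel a (t k) l - cosKernel a (t k - t j) l) / 2) +
      θ ^ 2 * cosKernel (2 - a) r l := by
  rw [sum_sum_cosKernel, sum_tentKernel_sub, cosKernel]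
  set A := ∑ j, u j * (1 - Real.cos (t j * l))
  set B := ∑ j, u j * Real.sin (t j * l)
  set p := l ^ (-1 - a)
  set q := l ^ (-1 - 1 : ℝ)
  set w := l ^ (-1 - (2 - a))
  have hp : 0 < p := Real.rpow_pos_of_pos hl _
  have hw : 0 < w := Real.rpow_pos_of_pos hl _
  have hpw : q * q = p * w := by
    simp only [p, q, w]
    rw [← Real.rpow_add hl, ← Real.rpow_add hl]; congr 1; ring
  set d := 1 - Real.cos (r * l)
  have hd0 : 0 ≤ d := by simp only [d]; linarith [Real.cos_le_one (r * l)]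
  have hd2 : d ≤ 2 := by simp only [d]; linarith [Real.neg_one_le_cos (r * l)]
  set g := Real.sin (s * l) * B - Real.cos (s * l) * A with hg
  have hgle : g ^ 2 ≤ A ^ 2 + B ^ 2 := by
    have h1 := Real.sin_sq_add_cos_sq (s * l)
    have : A ^ 2 + B ^ 2 - g ^ 2 = (Real.cos (s * l) * B + Real.sin (s * l) * A) ^ 2 := by
      rw [hg]
      linear_combination (-(A ^ 2) - B ^ 2) * h1
    nlinarith [sq_nonneg (Real.cos (s * l) * B + Real.sin (s * l) * A)]
  have h1 : θ * (d * q * g) ≤ p / 2 * g ^ 2 + θ ^ 2 * d ^ 2 * w / 2 := by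
    have h2 : 0 ≤ (p * g - θ * d * q) ^ 2 := sq_nonneg _
    have h3 : (p * g - θ * d * q) ^ 2 =
        2 * p * (p / 2 * g ^ 2 + θ ^ 2 * d ^ 2 * w / 2 - θ * (d * q * g)) := by
      linear_combination θ ^ 2 * d ^ 2 * hpw
    rw [h3] at h2
    have := nonneg_of_mul_nonneg_right h2 (by positivity : 0 < 2 * p)
    linarith
  have h4 : θ ^ 2 * d ^ 2 * w / 2 ≤ θ ^ 2 * (d * w) := by
    have : θ ^ 2 * w * d * d ≤ θ ^ 2 * w * d * 2 :=
      mul_le_mul_of_nonneg_left hd2 (by positivity)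
    linarith
  have h5 : p / 2 * g ^ 2 ≤ p / 2 * (A ^ 2 + B ^ 2) :=
    mul_le_mul_of_nonneg_left hgle (by positivity)
  linarith

/-- The covariance quadratic form of fractional Brownian motion is locally nondeterministic: the
variance of `∑ j, u j * B (t j)` is at least of the order of `u i ^ 2 * r ^ (2 * H)` whenever `t i`
is at distance at least `r` from `0` and from all other times. -/
lemma exists_fbm_quadForm_lower {H : ℝ} (hH : H ∈ Ioo (0:ℝ) 1) :
    ∃ c > 0, ∀ {ι : Type} [Fintype ι] (t u : ι → ℝ) (i : ι) (r : ℝ), 0 < r → r ≤ |t i| →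
      (∀ j, j ≠ i → r ≤ |t j - t i|) →
      c * r ^ (2 * H) * u i ^ 2 ≤ ∑ j, ∑ k, u j * u k *
        ((|t j| ^ (2 * H) + |t k| ^ (2 * H) - |t k - t j| ^ (2 * H)) / 2) := by
  have ha : 0 < 2 * H := by linarith [hH.1]
  have ha2 : 2 * H < 2 := by linarith [hH.2]
  have ha' : 0 < 2 - 2 * H := by linarith
  have ha2' : 2 - 2 * H < 2 := by linarith
  have hD := cosConst_pos one_pos one_lt_two
  have hC := cosConst_pos ha ha2
  have hC' := cosConst_pos ha' ha2'
  refine ⟨cosConst 1 ^ 2 / (4 * cosConst (2 * H) * cosConst (2 - 2 * H)), by positivity, ?_⟩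
  intro ι _ t u i r hr hti hsep
  set V := ∑ j, ∑ k, u j * u k *
        ((|t j| ^ (2 * H) + |t k| ^ (2 * H) - |t k - t j| ^ (2 * H)) / 2) with hV
  have hi := fun y => integrableOn_cosKernel ha ha2 y
  have hQint : ∀ j k, IntegrableOn (fun l => u j * u k * ((cosKernel (2 * H) (t j) l +
      cosKernel (2 * H) (t k) l - cosKernel (2 * H) (t k - t j) l) / 2)) (Ioi 0) := fun j k =>
    ((((hi _).add (hi _)).sub (hi _)).div_const 2).const_mul _
  have hQint' : IntegrableOn (fun l => ∑ j, ∑ k, u j * u k * ((cosKernel (2 * H) (t j) l +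
      cosKernel (2 * H) (t k) l - cosKernel (2 * H) (t k - t j) l) / 2)) (Ioi 0) :=
    integrable_finsetSum _ fun j _ => integrable_finsetSum _ fun k _ => hQint j k
  have hQ : ∫ l in Ioi (0:ℝ), ∑ j, ∑ k, u j * u k * ((cosKernel (2 * H) (t j) l +
      cosKernel (2 * H) (t k) l - cosKernel (2 * H) (t k - t j) l) / 2) =
      cosConst (2 * H) * V := by
    rw [integral_finsetSum _ fun j _ => integrable_finsetSum _ fun k _ => hQint j k, hV,
      Finset.mul_sum]
    refine Finset.sum_congr rfl fun j _ => ?_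
    rw [integral_finsetSum _ fun k _ => hQint j k, Finset.mul_sum]
    refine Finset.sum_congr rfl fun k _ => ?_
    rw [integral_const_mul, integral_div, integral_sub ((hi _).fun_add (hi _)) (hi _),
      integral_add (hi _) (hi _)]
    simp only [integral_cosKernel ha]
    ring
  have hTint : ∀ j, IntegrableOn (fun l => u j * (tentKernel r (t j - t i) l -
      tentKernel r (-t i) l)) (Ioi 0) := fun j =>
    ((integrableOn_tentKernel _ _).sub (integrableOn_tentKernel _ _)).const_mul _
  have hT : ∫ l in Ioi (0:ℝ), ∑ j, u j * (tentKernel r (t j - t i) l - tentKernel r (-t i) l) =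
      cosConst 1 * (r * u i) := by
    rw [integral_finsetSum _ fun j _ => hTint j]
    rw [Finset.sum_eq_single i]
    · rw [integral_const_mul, integral_sub (integrableOn_tentKernel _ _)
        (integrableOn_tentKernel _ _), integral_tentKernel, integral_tentKernel,
        half_abs_add_abs_sub_eq_zero (x := -t i) hr (by rwa [abs_neg])]
      simp only [sub_self, zero_add, zero_sub, abs_neg, abs_of_pos hr, abs_zero]
      ring
    · intro j _ hj
      rw [integral_const_mul, integral_sub (integrableOn_tentKernel _ _)
        (integrableOn_tentKernel _ _), integral_tentKernel, integral_tentKernel,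
        half_abs_add_abs_sub_eq_zero (x := -t i) hr (by rwa [abs_neg]),
        half_abs_add_abs_sub_eq_zero hr (hsep j hj)]
      simp
    · simp
  have key : ∀ θ : ℝ, θ * (cosConst 1 * (r * u i)) ≤
      cosConst (2 * H) * V + θ ^ 2 * (cosConst (2 - 2 * H) * r ^ (2 - 2 * H)) := by
    intro θ
    have hk := integrableOn_cosKernel ha' ha2' r
    have h := setIntegral_mono_on (μ := volume)
      ((integrable_finsetSum _ fun j _ => hTint j).const_mul θ)
      (hQint'.add (hk.const_mul (θ ^ 2))) measurableSet_Ioi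
      (fun l hl => mul_sum_tentKernel_le (2 * H) t u r (t i) θ hl)
    simp only [Pi.add_apply] at h
    rw [integral_const_mul, hT, integral_add hQint' (hk.const_mul _), hQ, integral_const_mul,
      integral_cosKernel ha', abs_of_pos hr] at h
    exact h
  have hrp : 0 < r ^ (2 - 2 * H) := Real.rpow_pos_of_pos hr _
  have hrr : r ^ (2 - 2 * H) * r ^ (2 * H) = r ^ 2 := by
    rw [← Real.rpow_add hr, ← Real.rpow_natCast]; congr 1; push_cast; ring
  have h := key (cosConst 1 * (r * u i) / (2 * (cosConst (2 - 2 * H) * r ^ (2 - 2 * H))))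
  set D := cosConst 1
  set C := cosConst (2 * H)
  set C' := cosConst (2 - 2 * H)
  set R := r ^ (2 - 2 * H)
  set S := r ^ (2 * H)
  have e : D ^ 2 / (4 * C * C') * S * u i ^ 2 * C =
      D * (r * u i) / (2 * (C' * R)) * (D * (r * u i)) -
      (D * (r * u i) / (2 * (C' * R))) ^ 2 * (C' * R) := by
    field_simp
    linear_combination 4 * u i ^ 2 * hrr
  have : D ^ 2 / (4 * C * C') * S * u i ^ 2 * C ≤ V * C := by
    rw [e]; linarith
  exact le_of_mul_le_mul_right this hC

open ProbabilityTheory in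
lemma gaussianReal_closedBall_le (m : ℝ) {v : ℝ≥0} {s : ℝ} (hs : 0 < s) (hv : s ^ 2 ≤ v)
    (y ε : ℝ) : gaussianReal m v (closedBall y ε) ≤ ENNReal.ofReal (ε / s) := by
  have hv0 : (0:ℝ) < v := lt_of_lt_of_le (by positivity) hv
  have hv1 : v ≠ 0 := fun h => by simp [h] at hv0
  rw [gaussianReal_apply _ hv1]
  have hsq : 2 * s ≤ √(2 * Real.pi * v) := by
    apply Real.le_sqrt_of_sq_le
    nlinarith [Real.pi_gt_three]
  calc ∫⁻ x in closedBall y ε, gaussianPDF m v x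
      ≤ ∫⁻ _ in closedBall y ε, ENNReal.ofReal (1 / (2 * s)) := by
        refine lintegral_mono fun x => ENNReal.ofReal_le_ofReal ?_
        rw [gaussianPDFReal, one_div]
        have h1 : (√(2 * Real.pi * v))⁻¹ ≤ (2 * s)⁻¹ := inv_anti₀ (by positivity) hsq
        have h2 : Real.exp (-(x - m) ^ 2 / (2 * v)) ≤ 1 := by
          rw [Real.exp_le_one_iff]
          exact div_nonpos_of_nonpos_of_nonneg (by nlinarith [sq_nonneg (x - m)]) (by positivity)
        calc _ ≤ (√(2 * Real.pi * v))⁻¹ * 1 := by gcongr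
          _ ≤ _ := by rwa [mul_one]
    _ = ENNReal.ofReal (ε / s) := by
        rw [setLIntegral_const, Real.volume_closedBall, ← ENNReal.ofReal_mul (by positivity)]
        congr 1
        field_simp

section Gaussian

open ProbabilityTheory

variable {Ω : Type*} [MeasurableSpace Ω] {P : Measure Ω}

/-- Linear regression: if the Gram matrix of `V` is nondegenerate then every square integrable `Y`
is the sum of a linear combination of `V` and a variable uncorrelated with `V`. -/
lemma exists_covariance_sub_eq_zero [IsProbabilityMeasure P] {n : ℕ} {V : Fin n → Ω → ℝ}
    {Y : Ω → ℝ} (hV : ∀ i, MemLp (V i) 2 P) (hY : MemLp Y 2 P)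
    (hnd : ∀ u : Fin n → ℝ, Var[fun ω => ∑ j, u j * V j ω; P] = 0 → u = 0) :
    ∃ a : Fin n → ℝ, ∀ i, cov[fun ω => Y ω - ∑ j, a j * V j ω, V i; P] = 0 := by
  have hsum : ∀ a : Fin n → ℝ, MemLp (fun ω => ∑ j, a j * V j ω) 2 P := fun a =>
    memLp_finsetSum _ fun j _ => (hV j).const_mul (a j)
  have hcov : ∀ (a : Fin n → ℝ) (Z : Ω → ℝ), MemLp Z 2 P →
      cov[fun ω => ∑ j, a j * V j ω, Z; P] = ∑ j, a j * cov[V j, Z; P] := by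
    intro a Z hZ
    rw [covariance_fun_sum_left (fun j => (hV j).const_mul (a j)) hZ]
    simp only [covariance_const_mul_left]
  let L : (Fin n → ℝ) →ₗ[ℝ] (Fin n → ℝ) :=
    Matrix.mulVecLin (Matrix.of fun i j => cov[V j, V i; P])
  have hL : ∀ a i, L a i = cov[fun ω => ∑ j, a j * V j ω, V i; P] := by
    intro a i
    rw [hcov a _ (hV i)]
    simp [L, Matrix.mulVec, dotProduct, mul_comm]
  have hinj : Function.Injective L := by
    rw [← LinearMap.ker_eq_bot, LinearMap.ker_eq_bot']
    intro u hu
    apply hnd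
    rw [← covariance_self (hsum u).aemeasurable, hcov u _ (hsum u)]
    refine Finset.sum_eq_zero fun j _ => ?_
    rw [covariance_comm, ← hL, hu]
    simp
  obtain ⟨a, ha⟩ := (LinearMap.injective_iff_surjective.mp hinj) fun i => cov[Y, V i; P]
  refine ⟨a, fun i => ?_⟩
  rw [covariance_fun_sub_left hY (hsum a) (hV i), ← hL, ha, sub_self]

/-- Small ball estimate for a Gaussian vector all of whose conditional variances are at least
`s ^ 2`. -/
lemma measure_forall_mem_closedBall_le {s : ℝ} (hs : 0 < s) (ε : ℝ) (n : ℕ) :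
    ∀ (X : Fin n → Ω → ℝ), HasGaussianLaw (fun ω i => X i ω) P → (∀ i, Measurable (X i)) →
      (∀ (u : Fin n → ℝ) (i : Fin n), s ^ 2 * u i ^ 2 ≤ Var[fun ω => ∑ j, u j * X j ω; P]) →
      ∀ x : Fin n → ℝ,
        P {ω | ∀ i, X i ω ∈ closedBall (x i) ε} ≤ ENNReal.ofReal (ε / s) ^ n := by
  induction n with
  | zero =>
    intro X hX _ _ x
    have := hX.isProbabilityMeasure
    simp
  | succ n ih =>
    intro X hX hXm hvar x
    have := hX.isProbabilityMeasure
    set V : Fin n → Ω → ℝ := fun i => X i.castSucc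
    set Y : Ω → ℝ := X (Fin.last n)
    have hXL : ∀ i, MemLp (X i) 2 P := fun i => (hX.eval i).memLp_two
    have hvarV : ∀ (u : Fin n → ℝ) (i : Fin n),
        s ^ 2 * u i ^ 2 ≤ Var[fun ω => ∑ j, u j * V j ω; P] := by
      intro u i
      have := hvar (Fin.snoc u 0) i.castSucc
      simpa [Fin.sum_univ_castSucc] using this
    have hVlaw : HasGaussianLaw (fun ω i => V i ω) P :=
      hX.map (ContinuousLinearMap.pi fun i : Fin n =>
        ContinuousLinearMap.proj (R := ℝ) (φ := fun _ : Fin (n + 1) => ℝ) i.castSucc)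
    obtain ⟨a, ha⟩ := exists_covariance_sub_eq_zero (V := V) (Y := Y) (fun i => hXL _) (hXL _) (by
      intro u hu
      funext i
      have h1 := hvarV u i
      rw [hu] at h1
      have h2 : u i ^ 2 ≤ 0 := by
        by_contra h
        push Not at h
        have : 0 < s ^ 2 * u i ^ 2 := by positivity
        linarith
      simpa using h2)
    set Z : Ω → ℝ := fun ω => Y ω - ∑ j, a j * V j ω
    have hVm : Measurable (fun ω i => V i ω) := measurable_pi_lambda _ fun i => hXm _
    have hZm : Measurable Z :=
      (hXm _).sub (Finset.measurable_sum _ fun j _ => (hXm _).const_mul _)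
    let LZ : (Fin (n + 1) → ℝ) →L[ℝ] ℝ :=
      ContinuousLinearMap.proj (R := ℝ) (φ := fun _ : Fin (n + 1) => ℝ) (Fin.last n) -
        ∑ j : Fin n, a j •
          ContinuousLinearMap.proj (R := ℝ) (φ := fun _ : Fin (n + 1) => ℝ) j.castSucc
    have hLZ : ∀ ω, LZ (fun i => X i ω) = Z ω := by
      intro ω
      simp [LZ, Z, Y, V]
    have hjoint : HasGaussianLaw (fun ω => ((fun i => V i ω), fun _ : Unit => Z ω)) P := by
      have h := hX.map ((ContinuousLinearMap.pi fun i : Fin n =>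
        ContinuousLinearMap.proj (R := ℝ) (φ := fun _ : Fin (n + 1) => ℝ) i.castSucc).prod
          (ContinuousLinearMap.pi fun _ : Unit => LZ))
      exact h.congr (ae_of_all _ fun ω => Prod.ext rfl (funext fun _ => hLZ ω))
    have hZlaw : HasGaussianLaw Z P := (hX.map LZ).congr (ae_of_all _ hLZ)
    have hind : IndepFun (fun ω i => V i ω) Z P :=
      (hjoint.indepFun_of_covariance_eval (X := V) (Y := fun _ : Unit => Z) (fun i _ => by
        rw [covariance_comm]; exact ha i)).comp measurable_id (measurable_pi_apply ())
    have hZvar : s ^ 2 ≤ Var[Z; P] := by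
      have := hvar (Fin.snoc (fun j => -a j) 1) (Fin.last n)
      rw [Fin.snoc_last] at this
      simp only [one_pow, mul_one, Fin.sum_univ_castSucc, Fin.snoc_castSucc, Fin.snoc_last,
        one_mul, neg_mul, Finset.sum_neg_distrib] at this
      convert this using 2
      funext ω
      simp only [Z, Y, V]
      ring
    set A : Set (Fin n → ℝ) := {v | ∀ i, v i ∈ closedBall (x i.castSucc) ε}
    have hAm : MeasurableSet A := by
      have : A = ⋂ i, (fun v : Fin n → ℝ => v i) ⁻¹' closedBall (x i.castSucc) ε := by
        ext v; simp [A]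
      rw [this]
      exact MeasurableSet.iInter fun i => measurable_pi_apply i measurableSet_closedBall
    let S : Set ((Fin n → ℝ) × ℝ) :=
      {p | p.1 ∈ A ∧ p.2 + ∑ j, a j * p.1 j ∈ closedBall (x (Fin.last n)) ε}
    have hSm : MeasurableSet S := by
      refine (measurable_fst hAm).inter ?_
      have : Measurable fun p : (Fin n → ℝ) × ℝ => p.2 + ∑ j, a j * p.1 j := by fun_prop
      exact this measurableSet_closedBall
    have hset : {ω | ∀ i, X i ω ∈ closedBall (x i) ε} =
        (fun ω => ((fun i => V i ω), Z ω)) ⁻¹' S := by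
      ext ω
      simp [S, A, Fin.forall_fin_succ', Z, Y, V]
    rw [hset, ← Measure.map_apply (hVm.prodMk hZm) hSm,
      hind.map_prod_eq_prod_map_map hVm.aemeasurable hZm.aemeasurable,
      Measure.prod_apply hSm]
    calc ∫⁻ v, P.map Z (Prod.mk v ⁻¹' S) ∂(P.map fun ω i => V i ω)
        ≤ ∫⁻ v, A.indicator (fun _ => ENNReal.ofReal (ε / s)) v ∂(P.map fun ω i => V i ω) := by
          refine lintegral_mono fun v => ?_
          by_cases hv : v ∈ A
          · rw [indicator_of_mem hv, hZlaw.map_eq_gaussianReal]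
            refine le_trans (measure_mono ?_) (gaussianReal_closedBall_le _ hs
              (v := Var[Z; P].toNNReal) (by rwa [Real.coe_toNNReal _ (variance_nonneg _ _)])
              (x (Fin.last n) - ∑ j, a j * v j) ε)
            intro z hz
            have hz2 := hz.2
            simp only [mem_closedBall, Real.dist_eq] at hz2 ⊢
            convert hz2 using 2
            ring
          · have : Prod.mk v ⁻¹' S = ∅ := by
              ext z; simp [S, hv]
            rw [this]
            simp
      _ = ENNReal.ofReal (ε / s) * P.map (fun ω i => V i ω) A := by
          rw [lintegral_indicator_const hAm]
      _ ≤ ENNReal.ofReal (ε / s) * ENNReal.ofReal (ε / s) ^ n := by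
          gcongr
          rw [Measure.map_apply hVm hAm]
          exact ih V hVlaw (fun i => hXm _) hvarV (fun i => x i.castSucc)
      _ = _ := by rw [pow_succ, mul_comm]

end Gaussian

lemma measurable_eval (t : unitInterval) : Measurable fun ω : PathSpace => ω.1 t :=
  ((continuous_eval_const t).comp continuous_subtype_val).measurable

section FBM

open ProbabilityTheory

variable {μ : Measure PathSpace} {K : unitInterval → unitInterval → ℝ}

lemma IsGaussianProcess.hasGaussianLaw (h : IsGaussianProcess μ K) {n : ℕ}
    (t : Fin n → unitInterval) : HasGaussianLaw (fun (ω : PathSpace) i => ω.1 (t i)) μ := by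
  refine ⟨isGaussian_of_map_eq_gaussianReal fun L => ⟨0,
    Real.toNNReal (∑ i, ∑ j, L (Pi.single i 1) * L (Pi.single j 1) * K (t i) (t j)), ?_⟩⟩
  · rw [← h.2 n t fun i => L (Pi.single i 1), Measure.map_map (by fun_prop)
      (measurable_pi_lambda _ fun i => measurable_eval (t i))]
    congr 1
    funext ω
    have := L.toLinearMap.pi_apply_eq_sum_univ fun i => ω.1 (t i)
    simp only [ContinuousLinearMap.coe_coe, smul_eq_mul] at this
    rw [Function.comp_apply, this]
    refine Finset.sum_congr rfl fun i _ => ?_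
    rw [mul_comm]
    congr 2
    funext j
    simp [Pi.single_apply, eq_comm]

lemma IsGaussianProcess.variance_eq (h : IsGaussianProcess μ K) {n : ℕ}
    (t : Fin n → unitInterval) (c : Fin n → ℝ) :
    Var[fun ω : PathSpace => ∑ i, c i * ω.1 (t i); μ] =
      max (∑ i, ∑ j, c i * c j * K (t i) (t j)) 0 := by
  have hm : Measurable fun ω : PathSpace => ∑ i, c i * ω.1 (t i) :=
    Finset.measurable_sum _ fun i _ => (measurable_eval (t i)).const_mul _
  have h1 := variance_map (X := id) (μ := μ) aemeasurable_id hm.aemeasurable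
  rw [h.2 n t c, variance_id_gaussianReal, Real.coe_toNNReal'] at h1
  exact h1.symm

lemma exists_fbm_variance_lower {H : ℝ} (hH : H ∈ Ioo (0:ℝ) 1) :
    ∃ c > 0, ∀ μ : Measure PathSpace, IsFBM H μ → ∀ (N : ℕ) (t : Fin N → unitInterval) (r : ℝ),
      0 < r → (∀ i, r ≤ (t i : ℝ)) → (∀ i j, j ≠ i → r ≤ |(t j : ℝ) - t i|) →
      ∀ (u : Fin N → ℝ) (i : Fin N), (c * r ^ H) ^ 2 * u i ^ 2 ≤
        Var[fun ω : PathSpace => ∑ j, u j * ω.1 (t j); μ] := by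
  obtain ⟨c, hc, hlow⟩ := exists_fbm_quadForm_lower hH
  refine ⟨√c, Real.sqrt_pos.mpr hc, fun μ h N t r hr ht hsep u i => ?_⟩
  have ht0 : ∀ i, 0 ≤ (t i : ℝ) := fun i => (t i).2.1
  have h1 := hlow (fun j => (t j : ℝ)) u i r hr ((ht i).trans (le_abs_self _)) (hsep i)
  simp only [abs_of_nonneg (ht0 _)] at h1
  have e : (√c * r ^ H) ^ 2 = c * r ^ (2 * H) := by
    rw [mul_pow, Real.sq_sqrt hc.le, mul_comm 2 H, Real.rpow_mul hr.le]
    norm_cast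
  rw [e, IsGaussianProcess.variance_eq h]
  exact h1.trans (le_max_left _ _)

lemma exists_uniform_grid {N : ℕ} (hN : 0 < N) :
    ∃ t : Fin N → unitInterval, (∀ i, (N : ℝ)⁻¹ ≤ (t i : ℝ)) ∧
      ∀ i j, j ≠ i → (N : ℝ)⁻¹ ≤ |(t j : ℝ) - t i| := by
  have hN' : (0:ℝ) < N := by exact_mod_cast hN
  have hmem : ∀ i : Fin N, ((i : ℕ) + 1 : ℝ) / N ∈ unitInterval := by
    intro i
    have : ((i : ℕ) + 1 : ℝ) ≤ N := by exact_mod_cast i.2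
    exact ⟨by positivity, (div_le_one hN').mpr this⟩
  refine ⟨fun i => ⟨_, hmem i⟩, fun i => ?_, fun i j hj => ?_⟩
  · rw [← one_div]
    change 1 / (N : ℝ) ≤ ((i : ℕ) + 1 : ℝ) / N
    gcongr
    have : (0:ℝ) ≤ (i : ℕ) := by positivity
    linarith
  · change (N : ℝ)⁻¹ ≤ |((j : ℕ) + 1 : ℝ) / N - ((i : ℕ) + 1 : ℝ) / N|
    rw [← sub_div, abs_div, abs_of_pos hN', ← one_div, add_sub_add_right_eq_sub]
    gcongr
    have h2 : ((j : ℕ) : ℤ) - ((i : ℕ) : ℤ) ≠ 0 := by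
      intro h3
      exact hj (Fin.ext (by omega))
    have h3 := Int.one_le_abs h2
    exact_mod_cast h3

lemma ball_subset_forall_mem_closedBall {N : ℕ} (t : Fin N → unitInterval) (ωb : PathSpace)
    (ε : ℝ) : ball ωb ε ⊆ {ω | ∀ i, ω.1 (t i) ∈ closedBall (ωb.1 (t i)) ε} := by
  intro ω hω i
  have h1 : dist ω.1 ωb.1 < ε := hω
  have h2 : dist (ω.1 (t i)) (ωb.1 (t i)) ≤ dist ω.1 ωb.1 := ContinuousMap.dist_apply_le_dist _
  exact mem_closedBall.mpr (h2.trans h1.le)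

/-- Polynomial form of the upper small ball estimate: `N` grid points are used. -/
lemma IsFBM.exists_measure_ball_le_pow {H : ℝ} (hH : H ∈ Ioo (0:ℝ) 1) (h : IsFBM H μ) :
    ∃ c > 0, ∀ (N : ℕ), 0 < N → ∀ (ωb : PathSpace) (ε : ℝ),
      μ (ball ωb ε) ≤ ENNReal.ofReal (ε * (N : ℝ) ^ H / c) ^ N := by
  obtain ⟨c, hc, hlow⟩ := exists_fbm_variance_lower hH
  refine ⟨c, hc, fun N hN ωb ε => ?_⟩
  have hN' : (0:ℝ) < N := by exact_mod_cast hN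
  obtain ⟨t, ht, hsep⟩ := exists_uniform_grid hN
  have hs : 0 < c * (N : ℝ)⁻¹ ^ H := by positivity
  have hg : HasGaussianLaw (fun (ω : PathSpace) i => ω.1 (t i)) μ :=
    IsGaussianProcess.hasGaussianLaw h t
  have hv := hlow μ h N t _ (inv_pos.mpr hN') ht hsep
  have hb := measure_forall_mem_closedBall_le (P := μ) hs ε N
    (fun i (ω : PathSpace) => ω.1 (t i)) hg (fun i => measurable_eval (t i)) hv
    (fun i => ωb.1 (t i))
  have he : ε / (c * (N : ℝ)⁻¹ ^ H) = ε * (N : ℝ) ^ H / c := by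
    rw [Real.inv_rpow hN'.le]
    field_simp
  rw [he] at hb
  exact (measure_mono (ball_subset_forall_mem_closedBall t ωb ε)).trans hb

/-- Upper small ball estimate for fractional Brownian motion, uniformly in the centre. -/
lemma IsFBM.exists_measure_ball_le_exp {H : ℝ} (hH : H ∈ Ioo (0:ℝ) 1) (h : IsFBM H μ) :
    ∃ C > 0, ∀ᶠ ε in 𝓝[>] (0:ℝ), ∀ ωb : PathSpace,
      (μ (ball ωb ε)).toReal ≤ Real.exp (-(C * ε ^ (-H⁻¹))) := by
  obtain ⟨c, hc, hb⟩ := h.exists_measure_ball_le_pow hH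
  have hH0 := hH.1
  have hce : 0 < c / Real.exp 1 := by positivity
  refine ⟨(c / Real.exp 1) ^ H⁻¹ / 2, by positivity, ?_⟩
  filter_upwards [Ioc_mem_nhdsGT hce] with ε hε ωb
  have hε0 : 0 < ε := hε.1
  set x : ℝ := (c / Real.exp 1 / ε) ^ H⁻¹ with hx
  have hx1 : 1 ≤ x := Real.one_le_rpow ((one_le_div hε0).mpr hε.2) (by positivity)
  set N := ⌊x⌋₊ with hN
  have hN1 : 1 ≤ N := Nat.le_floor (by exact_mod_cast hx1)
  have hNx : (N : ℝ) ≤ x := Nat.floor_le (by linarith)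
  have hxN : x < N + 1 := Nat.lt_floor_add_one x
  have hN1' : (1:ℝ) ≤ N := by exact_mod_cast hN1
  have hNH : (N : ℝ) ^ H ≤ c / Real.exp 1 / ε := by
    calc (N : ℝ) ^ H ≤ x ^ H := by gcongr
      _ = _ := Real.rpow_inv_rpow (by positivity) hH0.ne'
  have hle : ε * (N : ℝ) ^ H / c ≤ Real.exp (-1) := by
    rw [div_le_iff₀ hc, Real.exp_neg]
    calc ε * (N : ℝ) ^ H ≤ ε * (c / Real.exp 1 / ε) := by gcongr
      _ = _ := by field_simp
  have h1 : μ (ball ωb ε) ≤ ENNReal.ofReal (Real.exp (-N)) := by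
    refine (hb N hN1 ωb ε).trans ?_
    rw [show (-(N:ℝ)) = N * (-1) by ring, Real.exp_nat_mul,
      ENNReal.ofReal_pow (Real.exp_pos _).le]
    gcongr
  refine (ENNReal.toReal_le_of_le_ofReal (Real.exp_pos _).le h1).trans ?_
  rw [Real.exp_le_exp, neg_le_neg_iff]
  have hxe : x = (c / Real.exp 1) ^ H⁻¹ * ε ^ (-H⁻¹) := by
    rw [hx, Real.div_rpow hce.le hε0.le, Real.rpow_neg hε0.le]
    rfl
  have : (c / Real.exp 1) ^ H⁻¹ / 2 * ε ^ (-H⁻¹) = x / 2 := by rw [hxe]; ring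
  rw [this]
  linarith

end FBM

section Dyadic

open ProbabilityTheory

lemma gaussianReal_setOf_lt_abs_le (v : ℝ≥0) {x : ℝ} (hx : 0 ≤ x) :
    gaussianReal 0 v {y | x < |y|} ≤ ENNReal.ofReal (2 * Real.exp (-x ^ 2 / (2 * v))) := by
  have h1 : HasSubgaussianMGF id v (gaussianReal 0 v) :=
    ⟨fun t => integrable_exp_mul_gaussianReal t, fun t => by
      rw [mgf_id_gaussianReal]
      simp⟩
  have h2 := h1.measure_ge_le hx
  have h3 := h1.neg.measure_ge_le hx
  have hsub : {y : ℝ | x < |y|} ⊆ {y | x ≤ id y} ∪ {y | x ≤ (-id) y} := by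
    intro y hy
    rcases lt_abs.mp (show x < |y| from hy) with h | h
    · exact Or.inl h.le
    · exact Or.inr h.le
  refine (measure_mono hsub).trans ((measure_union_le _ _).trans ?_)
  rw [two_mul, ENNReal.ofReal_add (Real.exp_pos _).le (Real.exp_pos _).le]
  gcongr <;> rw [ENNReal.le_ofReal_iff_toReal_le (measure_ne_top _ _) (Real.exp_pos _).le]
  exacts [h2, h3]

variable {μ : Measure PathSpace} {H : ℝ}

lemma IsFBM.map_sub (hH : 0 < H) (h : IsFBM H μ) (s t : unitInterval) :
    μ.map (fun ω : PathSpace => ω.1 t - ω.1 s) =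
      gaussianReal 0 (Real.toNNReal (|(t : ℝ) - s| ^ (2 * H))) := by
  have h1 := h.2 2 ![t, s] ![1, -1]
  have h0 : (0:ℝ) ^ (2 * H) = 0 := Real.zero_rpow (by positivity)
  simp only [Fin.sum_univ_two, Matrix.cons_val_zero, Matrix.cons_val_one, one_mul, neg_mul,
    sub_self, abs_zero, h0, abs_sub_comm (s : ℝ) (t : ℝ)] at h1
  convert h1 using 2
  · exact funext fun ω => sub_eq_add_neg _ _
  · congr 1
    ring

lemma dist_gridPt_succ_le (n k : ℕ) :
    |(gridPt n (k + 1) : ℝ) - gridPt n k| ≤ (n : ℝ)⁻¹ := by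
  have h1 : |(gridPt n (k + 1) : ℝ) - gridPt n k| ≤ |((k + 1 : ℕ) : ℝ) / n - (k : ℝ) / n| := by
    refine (abs_min_sub_min_le_max _ _ _ _).trans (max_le ?_ (by simp))
    exact (abs_max_sub_max_le_max _ _ _ _).trans (max_le le_rfl (by simp))
  refine h1.trans (le_of_eq ?_)
  rw [← sub_div, Nat.cast_add_one, add_sub_cancel_left, one_div, abs_of_nonneg (by positivity)]

/-- Paths whose increments over dyadic intervals of level `n ≥ M` are at most `r ^ n`. -/
def dyadicRegular (r : ℝ) (M : ℕ) : Set PathSpace :=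
  {ω | ∀ n ≥ M, ∀ k < 2 ^ n, |ω.1 (gridPt (2 ^ n) (k + 1)) - ω.1 (gridPt (2 ^ n) k)| ≤ r ^ n}

lemma IsFBM.measure_lt_increment_le (hH : 0 < H) (h : IsFBM H μ) {x : ℝ} (hx : 0 ≤ x) (n k : ℕ)
    (hn : 0 < n) :
    μ {ω | x < |ω.1 (gridPt n (k + 1)) - ω.1 (gridPt n k)|} ≤
      ENNReal.ofReal (2 * Real.exp (-(x ^ 2 * (n : ℝ) ^ (2 * H) / 2))) := by
  have hn' : (0:ℝ) < n := by exact_mod_cast hn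
  set s := gridPt n k
  set t := gridPt n (k + 1)
  have hd : |(t : ℝ) - s| ≤ (n : ℝ)⁻¹ := dist_gridPt_succ_le n k
  have hm : Measurable fun ω : PathSpace => ω.1 t - ω.1 s :=
    (measurable_eval t).sub (measurable_eval s)
  have h1 : μ {ω | x < |ω.1 t - ω.1 s|} =
      gaussianReal 0 (Real.toNNReal (|(t : ℝ) - s| ^ (2 * H))) {y | x < |y|} := by
    rw [← h.map_sub hH s t, Measure.map_apply hm (measurableSet_lt measurable_const (by fun_prop))]
    rfl
  rw [h1]
  rcases (abs_nonneg ((t : ℝ) - s)).eq_or_lt with h0 | h0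
  · rw [← h0, Real.zero_rpow (by positivity), Real.toNNReal_zero, gaussianReal_zero_var]
    have : {y : ℝ | x < |y|} ⊆ {0}ᶜ := by
      rintro y hy rfl
      simp only [mem_ofPred_eq, abs_zero] at hy
      linarith
    refine (measure_mono this).trans ?_
    simp
  · refine (gaussianReal_setOf_lt_abs_le _ hx).trans ?_
    rw [Real.coe_toNNReal _ (by positivity)]
    gcongr
    rw [neg_div, neg_le_neg_iff, mul_comm 2 (_ ^ _), ← div_div, div_eq_mul_inv (x ^ 2)]
    gcongr
    rw [← Real.inv_rpow h0.le]
    gcongr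
    rwa [le_inv_comm₀ hn' h0]

lemma summable_two_pow_mul_exp {b : ℝ} (hb : 1 < b) :
    Summable fun n : ℕ => (2:ℝ) ^ n * (2 * Real.exp (-(b ^ n / 2))) := by
  obtain ⟨m, hm⟩ := pow_unbounded_of_one_lt 4 hb
  have hb0 : 0 < b := by linarith
  refine Summable.of_nonneg_of_le (fun n => by positivity) (fun n => ?_)
    ((summable_geometric_of_lt_one (r := (1/2:ℝ)) (by norm_num) (by norm_num)).mul_left
      ((2 * (m.factorial * 2 ^ m) : ℝ)))
  have h1 := Real.pow_div_factorial_le_exp (x := b ^ n / 2) (by positivity) m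
  have hf : (0:ℝ) < m.factorial := by exact_mod_cast m.factorial_pos
  have h2 : (4:ℝ) ^ n ≤ (b ^ n) ^ m := by
    rw [← pow_mul, mul_comm, pow_mul]
    gcongr
  have h3 : (4:ℝ) ^ n / (m.factorial * 2 ^ m) ≤ Real.exp (b ^ n / 2) := by
    refine le_trans ?_ h1
    rw [div_pow, div_div, mul_comm (2 ^ m : ℝ)]
    gcongr
  rw [Real.exp_neg]
  have h4 : (Real.exp (b ^ n / 2))⁻¹ ≤ m.factorial * 2 ^ m / 4 ^ n := by
    rw [← inv_div (4 ^ n : ℝ)]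
    exact inv_anti₀ (by positivity) h3
  calc (2:ℝ) ^ n * (2 * (Real.exp (b ^ n / 2))⁻¹)
      ≤ 2 ^ n * (2 * (m.factorial * 2 ^ m / 4 ^ n)) := by gcongr
    _ = _ := by
      rw [show (4:ℝ) = 2 * 2 by norm_num, mul_pow, one_div, inv_pow]
      field_simp

lemma IsFBM.ae_exists_mem_dyadicRegular (h : IsFBM H μ) {α : ℝ} (hH : 0 < H) (hα : α < H) :
    ∀ᵐ ω ∂μ, ∃ M, ω ∈ dyadicRegular (2 ^ (-α)) M := by
  set r : ℝ := 2 ^ (-α) with hr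
  have hr0 : 0 < r := by positivity
  set b : ℝ := 2 ^ (2 * (H - α)) with hb
  have hb1 : 1 < b := Real.one_lt_rpow (by norm_num) (by linarith)
  have hrb : ∀ n : ℕ, (r ^ n) ^ 2 * ((2 ^ n : ℕ) : ℝ) ^ (2 * H) = b ^ n := by
    intro n
    rw [hr, hb, Nat.cast_pow, Nat.cast_ofNat, ← pow_mul, ← Real.rpow_natCast, ← Real.rpow_natCast,
      ← Real.rpow_natCast, ← Real.rpow_mul (by norm_num), ← Real.rpow_mul (by norm_num),
      ← Real.rpow_mul (by norm_num), ← Real.rpow_add (by norm_num)]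
    congr 1
    push_cast
    ring
  let B : ℕ → Set PathSpace := fun n => ⋃ k ∈ Finset.range (2 ^ n),
    {ω | r ^ n < |ω.1 (gridPt (2 ^ n) (k + 1)) - ω.1 (gridPt (2 ^ n) k)|}
  have hB : ∀ n, μ (B n) ≤ ENNReal.ofReal (2 ^ n * (2 * Real.exp (-(b ^ n / 2)))) := by
    intro n
    refine (measure_biUnion_finset_le _ _).trans ?_
    refine (Finset.sum_le_sum fun k _ =>
      h.measure_lt_increment_le hH (pow_pos hr0 n).le (2 ^ n) k (by positivity)).trans ?_
    rw [hrb, Finset.sum_const, Finset.card_range, nsmul_eq_mul,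
      ENNReal.ofReal_mul (by positivity : (0:ℝ) ≤ 2 ^ n)]
    gcongr
    rw [ENNReal.ofReal_pow (by norm_num)]
    simp
  have hsum : ∑' n, μ (B n) ≠ ∞ :=
    ne_top_of_le_ne_top (summable_two_pow_mul_exp hb1).tsum_ofReal_ne_top (ENNReal.tsum_le_tsum hB)
  filter_upwards [ae_eventually_notMem hsum] with ω hω
  obtain ⟨M, hM⟩ := eventually_atTop.mp hω
  refine ⟨M, fun n hn k hk => ?_⟩
  by_contra hc
  exact hM n hn (mem_biUnion (Finset.mem_coe.mpr (Finset.mem_range.mpr hk)) (not_le.mp hc))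

end Dyadic

section Coding

variable {μ : Measure PathSpace} {r : ℝ}

lemma gridPt_two_pow_succ (n k : ℕ) : gridPt (2 ^ (n + 1)) (2 * k) = gridPt (2 ^ n) k := by
  rw [gridPt, gridPt]
  congr 1
  push_cast
  rw [pow_succ]
  field_simp

lemma gridPt_zero (n : ℕ) : gridPt n 0 = 0 := by
  rw [gridPt, Nat.cast_zero, zero_div]
  exact Subtype.ext (by simp [clampI])

lemma floor_two_pow_succ (n : ℕ) {t : ℝ} (ht : 0 ≤ t) :
    ⌊2 ^ (n + 1) * t⌋₊ = 2 * ⌊2 ^ n * t⌋₊ ∨ ⌊2 ^ (n + 1) * t⌋₊ = 2 * ⌊2 ^ n * t⌋₊ + 1 := by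
  have h1 := Nat.floor_le (a := 2 ^ n * t) (by positivity)
  have h2 := Nat.lt_floor_add_one (2 ^ n * t)
  have h3 : 2 * ⌊2 ^ n * t⌋₊ ≤ ⌊2 ^ (n + 1) * t⌋₊ := by
    refine Nat.le_floor ?_
    push_cast
    rw [pow_succ]
    linarith
  have h4 : ⌊2 ^ (n + 1) * t⌋₊ < 2 * ⌊2 ^ n * t⌋₊ + 2 := by
    rw [Nat.floor_lt (by positivity)]
    push_cast
    rw [pow_succ]
    linarith
  omega

lemma tendsto_gridPt_floor (t : unitInterval) :
    Tendsto (fun n : ℕ => gridPt (2 ^ n) ⌊2 ^ n * (t : ℝ)⌋₊) atTop (𝓝 t) := by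
  have hc : Continuous clampI :=
    ((continuous_id.max continuous_const).min continuous_const).subtype_mk _
  have ht : clampI t = t := by
    refine Subtype.ext ?_
    simp [clampI, t.2.1, t.2.2]
  have h1 : Tendsto (fun n : ℕ => ((⌊2 ^ n * (t : ℝ)⌋₊ : ℝ)) / ((2 ^ n : ℕ) : ℝ)) atTop
      (𝓝 (t : ℝ)) := by
    have h2 := (tendsto_nat_floor_mul_div_atTop t.2.1).comp
      (tendsto_pow_atTop_atTop_of_one_lt (r := (2:ℝ)) (by norm_num))
    refine h2.congr fun n => ?_
    simp [mul_comm]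
  have h3 := (hc.tendsto (t : ℝ)).comp h1
  rw [ht] at h3
  exact h3

lemma abs_sub_gridPt_floor_le (hr : 0 < r) (hr1 : r < 1) {M n : ℕ} (hn : M ≤ n) {ω : PathSpace}
    (hω : ω ∈ dyadicRegular r M) (t : unitInterval) :
    |ω.1 (gridPt (2 ^ n) ⌊2 ^ n * (t : ℝ)⌋₊) - ω.1 t| ≤ r ^ n / (1 - r) := by
  let d : ℕ → unitInterval := fun m => gridPt (2 ^ m) ⌊2 ^ m * (t : ℝ)⌋₊
  have hstep : ∀ m ≥ M, dist (ω.1 (d m)) (ω.1 (d (m + 1))) ≤ r ^ m := by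
    intro m hm
    have hg := gridPt_two_pow_succ m ⌊2 ^ m * (t : ℝ)⌋₊
    rcases floor_two_pow_succ m t.2.1 with h | h
    · have : d (m + 1) = d m := by
        simp only [d, h, hg]
      rw [this, dist_self]
      positivity
    · have h1 : d (m + 1) = gridPt (2 ^ (m + 1)) (2 * ⌊2 ^ m * (t : ℝ)⌋₊ + 1) := by
        simp only [d, h]
      have h2 : d m = gridPt (2 ^ (m + 1)) (2 * ⌊2 ^ m * (t : ℝ)⌋₊) := hg.symm
      have h3 : 2 * ⌊2 ^ m * (t : ℝ)⌋₊ + 1 ≤ 2 ^ (m + 1) := by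
        rw [← h]
        refine Nat.floor_le_of_le ?_
        push_cast
        exact mul_le_of_le_one_right (by positivity) t.2.2
      rw [h1, h2, dist_comm, Real.dist_eq]
      refine (hω (m + 1) (by omega) _ (by omega)).trans ?_
      exact pow_le_pow_of_le_one hr.le hr1.le (by omega)
  have hlim : Tendsto (fun j : ℕ => ω.1 (d (n + j))) atTop (𝓝 (ω.1 t)) := by
    have h1 := (ω.1.continuous.tendsto t).comp (tendsto_gridPt_floor t)
    have h2 := h1.comp (tendsto_add_atTop_nat n)
    refine h2.congr fun j => ?_
    simp only [Function.comp_apply, d, add_comm]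
  have := dist_le_of_le_geometric_of_tendsto₀ r (r ^ n) hr1
    (f := fun j : ℕ => ω.1 (d (n + j))) (fun j => by
      rw [← pow_add]
      exact hstep (n + j) (by omega)) hlim
  simpa [Real.dist_eq, d] using this

/-- The increments along the level-`n` dyadic grid of the path rounded down to multiples
of `δ`. -/
def dyadicCode (δ : ℝ) (n : ℕ) (ω : PathSpace) (k : Fin (2 ^ n)) : ℤ :=
  ⌊ω.1 (gridPt (2 ^ n) (k + 1)) / δ⌋ - ⌊ω.1 (gridPt (2 ^ n) k) / δ⌋

lemma dyadicCode_mem (hr : 0 < r) {M n : ℕ} (hn : M ≤ n) {ω : PathSpace}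
    (hω : ω ∈ dyadicRegular r M) :
    dyadicCode (r ^ n) n ω ∈ Fintype.piFinset fun _ : Fin (2 ^ n) => Finset.Icc (-1 : ℤ) 1 := by
  have hδ : 0 < r ^ n := by positivity
  have key : ∀ x y : ℝ, x - y ≤ r ^ n → ⌊x / r ^ n⌋ ≤ ⌊y / r ^ n⌋ + 1 := by
    intro x y hxy
    rw [← Int.floor_add_one]
    refine Int.floor_le_floor ?_
    rw [← sub_le_iff_le_add', ← sub_div]
    exact (div_le_one hδ).mpr hxy
  refine Fintype.mem_piFinset.mpr fun k => Finset.mem_Icc.mpr ?_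
  have h := abs_le.mp (hω n hn k k.2)
  have h1 := key (ω.1 (gridPt (2 ^ n) (k + 1))) (ω.1 (gridPt (2 ^ n) k)) h.2
  have h2 := key (ω.1 (gridPt (2 ^ n) k)) (ω.1 (gridPt (2 ^ n) (k + 1))) (by linarith [h.1])
  simp only [dyadicCode]
  omega

lemma floor_eq_of_dyadicCode_eq {δ : ℝ} {n : ℕ} {ω ω' : PathSpace}
    (h : dyadicCode δ n ω = dyadicCode δ n ω') {k : ℕ} (hk : k ≤ 2 ^ n) :
    ⌊ω.1 (gridPt (2 ^ n) k) / δ⌋ = ⌊ω'.1 (gridPt (2 ^ n) k) / δ⌋ := by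
  induction k with
  | zero => rw [gridPt_zero, ω.2, ω'.2]
  | succ k ih =>
    have h1 := congrFun h ⟨k, hk⟩
    have h2 := ih (by omega)
    simp only [dyadicCode] at h1
    omega

lemma dist_lt_of_dyadicCode_eq (hr : 0 < r) (hr1 : r < 1) {M n : ℕ} (hn : M ≤ n)
    {ω ω' : PathSpace} (hω : ω ∈ dyadicRegular r M) (hω' : ω' ∈ dyadicRegular r M)
    (h : dyadicCode (r ^ n) n ω = dyadicCode (r ^ n) n ω') :
    dist ω ω' < (2 + 2 / (1 - r)) * r ^ n := by
  have hδ : 0 < r ^ n := by positivity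
  have h1r : 0 < 1 - r := by linarith
  have hle : dist ω.1 ω'.1 ≤ (1 + 2 / (1 - r)) * r ^ n := by
    refine (ContinuousMap.dist_le (by positivity)).mpr fun t => ?_
    have h1 := abs_sub_gridPt_floor_le hr hr1 hn hω t
    have h2 := abs_sub_gridPt_floor_le hr hr1 hn hω' t
    have hk : ⌊2 ^ n * (t : ℝ)⌋₊ ≤ 2 ^ n := by
      refine Nat.floor_le_of_le ?_
      push_cast
      exact mul_le_of_le_one_right (by positivity) t.2.2
    set s := gridPt (2 ^ n) ⌊2 ^ n * (t : ℝ)⌋₊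
    have h3 := Int.abs_sub_lt_one_of_floor_eq_floor (floor_eq_of_dyadicCode_eq h hk)
    rw [← sub_div, abs_div, abs_of_pos hδ, div_lt_one hδ] at h3
    have h4 : (1 + 2 / (1 - r)) * r ^ n = r ^ n / (1 - r) + r ^ n + r ^ n / (1 - r) := by ring
    rw [Real.dist_eq, h4]
    rw [abs_le] at h1 h2 ⊢
    rw [abs_lt] at h3
    constructor <;> linarith [h1.1, h1.2, h2.1, h2.2, h3.1, h3.2]
  have hlt : (1 + 2 / (1 - r)) * r ^ n < (2 + 2 / (1 - r)) * r ^ n := by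
    gcongr
    norm_num
  exact hle.trans_lt hlt

/-- If the points of `E` are coded by a finite set so that points with equal codes are
close, then few points of `E` have small balls. -/
lemma measure_setOf_measure_ball_lt_le {X ι : Type*} [PseudoMetricSpace X] [MeasurableSpace X]
    (ν : Measure X) (E : Set X) (S : Finset ι) (f : X → ι) (hf : ∀ x ∈ E, f x ∈ S) (ρ : ℝ)
    (hρ : ∀ x ∈ E, ∀ y ∈ E, f x = f y → dist x y < ρ) (θ : ℝ≥0∞) :
    ν {x ∈ E | ν (ball x ρ) < θ} ≤ S.card * θ := by
  have hsub : {x ∈ E | ν (ball x ρ) < θ} ⊆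
      ⋃ c ∈ S, {x ∈ E | ν (ball x ρ) < θ ∧ f x = c} :=
    fun x hx => mem_biUnion (Finset.mem_coe.mpr (hf x hx.1)) ⟨hx.1, hx.2, rfl⟩
  refine (measure_mono hsub).trans ((measure_biUnion_finset_le _ _).trans ?_)
  rw [← nsmul_eq_mul]
  refine Finset.sum_le_card_nsmul _ _ _ fun c _ => ?_
  rcases {x ∈ E | ν (ball x ρ) < θ ∧ f x = c}.eq_empty_or_nonempty with h | ⟨y, hyE, hyθ, hyc⟩
  · simp [h]
  · refine (measure_mono ?_).trans hyθ.le
    intro x hx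
    exact hρ x hx.1 y hyE (hx.2.2.trans hyc.symm)

lemma ae_eventually_le_measure_ball (hr : 0 < r) (hr1 : r < 1) (M : ℕ) :
    ∀ᵐ ω ∂μ, ω ∈ dyadicRegular r M → ∀ᶠ n : ℕ in atTop,
      ((2 ^ n * 3 ^ 2 ^ n : ℝ≥0∞))⁻¹ ≤ μ (ball ω ((2 + 2 / (1 - r)) * r ^ n)) := by
  let B : ℕ → Set PathSpace := fun n => {ω | M ≤ n ∧ ω ∈ dyadicRegular r M ∧
    μ (ball ω ((2 + 2 / (1 - r)) * r ^ n)) < ((2 ^ n * 3 ^ 2 ^ n : ℝ≥0∞))⁻¹}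
  have hB : ∀ n, μ (B n) ≤ (2⁻¹ : ℝ≥0∞) ^ n := by
    intro n
    by_cases hn : M ≤ n
    · have h1 := measure_setOf_measure_ball_lt_le μ (dyadicRegular r M) _ (dyadicCode (r ^ n) n)
        (fun ω hω => dyadicCode_mem hr hn hω) _
        (fun ω hω ω' hω' h => dist_lt_of_dyadicCode_eq hr hr1 hn hω hω' h)
        ((2 ^ n * 3 ^ 2 ^ n : ℝ≥0∞))⁻¹
      refine (measure_mono fun ω hω => hω.2).trans (h1.trans_eq ?_)
      rw [Fintype.card_piFinset_const, Int.card_Icc,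
        show (1 + 1 - -1 : ℤ).toNat = 3 from rfl, ENNReal.mul_inv (by simp) (by simp),
        ← ENNReal.inv_pow, Nat.cast_pow, Nat.cast_ofNat, mul_left_comm,
        ENNReal.mul_inv_cancel (by simp) (by simp), mul_one]
    · simp [B, hn]
  have hsum : ∑' n, μ (B n) ≠ ∞ := by
    refine ne_top_of_le_ne_top ?_ (ENNReal.tsum_le_tsum hB)
    rw [ENNReal.tsum_geometric]
    simp
  filter_upwards [ae_eventually_notMem hsum] with ω hω hE
  filter_upwards [hω, eventually_ge_atTop M] with n hn hM
  by_contra hc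
  exact hn ⟨hM, hE, not_le.mp hc⟩

lemma exp_neg_le_inv_two_pow_mul (n : ℕ) :
    ENNReal.ofReal (Real.exp (-(3 * 2 ^ n))) ≤ ((2 ^ n * 3 ^ 2 ^ n : ℝ≥0∞))⁻¹ := by
  rw [Real.exp_neg, ENNReal.ofReal_inv_of_pos (Real.exp_pos _), ENNReal.inv_le_inv]
  have h1 : (2:ℝ) ^ n ≤ Real.exp (2 ^ n) := by linarith [Real.add_one_le_exp ((2:ℝ) ^ n)]
  have h2 : (3:ℝ) ^ 2 ^ n ≤ Real.exp (2 * 2 ^ n) := by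
    have h3 : (3:ℝ) ≤ Real.exp 2 := by linarith [Real.add_one_le_exp (2:ℝ)]
    have h4 : Real.exp (2 * 2 ^ n) = Real.exp 2 ^ 2 ^ n := by
      rw [← Real.exp_nat_mul]
      push_cast
      ring_nf
    rw [h4]
    gcongr
  have h5 : (2:ℝ) ^ n * 3 ^ 2 ^ n ≤ Real.exp (3 * 2 ^ n) := by
    rw [show (3 * 2 ^ n : ℝ) = 2 ^ n + 2 * 2 ^ n by ring, Real.exp_add]
    gcongr
  have h6 : ((2 ^ n * 3 ^ 2 ^ n : ℝ≥0∞)) = ENNReal.ofReal ((2:ℝ) ^ n * 3 ^ 2 ^ n) := by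
    rw [ENNReal.ofReal_mul (by positivity), ENNReal.ofReal_pow (by norm_num),
      ENNReal.ofReal_pow (by norm_num)]
    simp
  rw [h6]
  exact ENNReal.ofReal_le_ofReal h5

lemma IsFBM.ae_exists_exp_le_measure_ball {H : ℝ} (h : IsFBM H μ) {α : ℝ} (hα : α ∈ Ioo 0 H) :
    ∀ᵐ ω ∂μ, ∃ C > 0, ∀ᶠ ε in 𝓝[>] (0:ℝ),
      Real.exp (-(C * ε ^ (-α⁻¹))) ≤ (μ (ball ω ε)).toReal := by
  have hα0 : 0 < α := hα.1
  have := h.1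
  set r : ℝ := 2 ^ (-α) with hr
  have hr0 : 0 < r := by positivity
  have hr1 : r < 1 := Real.rpow_lt_one_of_one_lt_of_neg (by norm_num) (by linarith)
  have h1r : 0 < 1 - r := by linarith
  have hall := ae_all_iff.mpr fun M => ae_eventually_le_measure_ball (μ := μ) hr0 hr1 M
  filter_upwards [h.ae_exists_mem_dyadicRegular (hα.1.trans hα.2) hα.2, hall] with ω hω hball
  obtain ⟨M, hM⟩ := hω
  obtain ⟨N, hN⟩ := eventually_atTop.mp (hball M hM)
  set D : ℝ := 2 + 2 / (1 - r)
  have hD : 0 < D := by positivity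
  refine ⟨6 * D ^ α⁻¹, by positivity, ?_⟩
  have hε1 : 0 < D / (2 ^ N) ^ α := by positivity
  filter_upwards [Ioo_mem_nhdsGT hε1] with ε hε
  have hε0 : 0 < ε := hε.1
  have hy : (2:ℝ) ^ N ≤ (D / ε) ^ α⁻¹ := by
    rw [Real.le_rpow_inv_iff_of_pos (by positivity) (by positivity) hα0, le_div_iff₀ hε0, mul_comm,
      ← le_div_iff₀ (by positivity)]
    exact hε.2.le
  obtain ⟨m, hm1, hm2⟩ := exists_nat_pow_near
    ((one_le_pow₀ (by norm_num : (1:ℝ) ≤ 2)).trans hy) (by norm_num : (1:ℝ) < 2)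
  have hmN : N ≤ m + 1 :=
    ((pow_lt_pow_iff_right₀ (by norm_num : (1:ℝ) < 2)).mp (hy.trans_lt hm2)).le
  have hrad : D * r ^ (m + 1) ≤ ε := by
    have h1 : D / ε ≤ ((2:ℝ) ^ (m + 1)) ^ α :=
      (Real.rpow_inv_le_iff_of_pos (by positivity) (by positivity) hα0).mp hm2.le
    have h2 : r ^ (m + 1) = (((2:ℝ) ^ (m + 1)) ^ α)⁻¹ := by
      rw [hr, Real.rpow_neg (by norm_num), inv_pow, Real.rpow_pow_comm (by norm_num)]
    rw [h2, ← div_eq_mul_inv, div_le_iff₀ (by positivity), mul_comm, ← div_le_iff₀ hε0]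
    exact h1
  have hmeas : ENNReal.ofReal (Real.exp (-(3 * 2 ^ (m + 1)))) ≤ μ (ball ω ε) :=
    (exp_neg_le_inv_two_pow_mul _).trans
      ((hN _ hmN).trans (measure_mono (ball_subset_ball hrad)))
  rw [ENNReal.ofReal_le_iff_le_toReal (measure_ne_top _ _)] at hmeas
  refine le_trans ?_ hmeas
  rw [Real.exp_le_exp, neg_le_neg_iff]
  have h3 : (D / ε) ^ α⁻¹ = D ^ α⁻¹ * ε ^ (-α⁻¹) := by
    rw [Real.div_rpow hD.le hε0.le, Real.rpow_neg hε0.le]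
    rfl
  rw [h3] at hm1
  rw [pow_succ]
  linarith

end Coding

section LocalOrder

variable {μ : Measure PathSpace}

lemma tendsto_add_log_div_neg_log (a C : ℝ) :
    Tendsto (fun ε : ℝ => a + Real.log C / (-Real.log ε)) (𝓝[>] 0) (𝓝 a) := by
  have h1 : Tendsto (fun ε : ℝ => -Real.log ε) (𝓝[>] 0) atTop :=
    tendsto_neg_atBot_atTop.comp Real.tendsto_log_nhdsGT_zero
  simpa using (h1.const_div_atTop (Real.log C)).const_add a

lemma log_mul_rpow_neg_div {a C ε : ℝ} (hC : 0 < C) (hε : 0 < ε) (hε1 : ε < 1) :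
    Real.log (C * ε ^ (-a)) / (-Real.log ε) = a + Real.log C / (-Real.log ε) := by
  have hl : -Real.log ε ≠ 0 := (neg_pos.mpr (Real.log_neg hε hε1)).ne'
  rw [Real.log_mul hC.ne' (by positivity), Real.log_rpow hε, add_div, add_comm,
    show -a * Real.log ε = a * -Real.log ε by ring, mul_div_cancel_right₀ _ hl]

lemma log_neg_log_div_le {a C ε m : ℝ} (hC : 0 < C) (hε : 0 < ε) (hε1 : ε < 1) (hm1 : m < 1)
    (h : Real.exp (-(C * ε ^ (-a))) ≤ m) :
    Real.log (-Real.log m) / (-Real.log ε) ≤ a + Real.log C / (-Real.log ε) := by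
  have hm0 : 0 < m := (Real.exp_pos _).trans_le h
  have hl : 0 < -Real.log ε := neg_pos.mpr (Real.log_neg hε hε1)
  rw [← log_mul_rpow_neg_div hC hε hε1]
  have h1 := (Real.le_log_iff_exp_le hm0).mpr h
  have h2 : 0 < -Real.log m := neg_pos.mpr (Real.log_neg hm0 hm1)
  gcongr
  linarith

lemma le_log_neg_log_div {a C ε m : ℝ} (hC : 0 < C) (hε : 0 < ε) (hε1 : ε < 1) (hm0 : 0 < m)
    (h : m ≤ Real.exp (-(C * ε ^ (-a)))) :
    a + Real.log C / (-Real.log ε) ≤ Real.log (-Real.log m) / (-Real.log ε) := by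
  have hl : 0 < -Real.log ε := neg_pos.mpr (Real.log_neg hε hε1)
  rw [← log_mul_rpow_neg_div hC hε hε1]
  have h1 := (Real.log_le_iff_le_exp hm0).mpr h
  gcongr
  linarith

lemma le_lowerLocOrd {a C : ℝ} (hC : 0 < C) {ω : PathSpace}
    (h : ∀ᶠ ε in 𝓝[>] (0:ℝ), 0 < (μ (ball ω ε)).toReal ∧
      (μ (ball ω ε)).toReal ≤ Real.exp (-(C * ε ^ (-a)))) :
    (a : EReal) ≤ lowerLocOrd μ ω := by
  have h1 := (continuous_coe_real_ereal.tendsto a).comp (tendsto_add_log_div_neg_log a C)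
  rw [← h1.liminf_eq]
  refine liminf_le_liminf ?_
  filter_upwards [h, Ioo_mem_nhdsGT one_pos] with ε hε hε1
  exact EReal.coe_le_coe_iff.mpr (le_log_neg_log_div hC hε1.1 hε1.2 hε.1 hε.2)

lemma upperLocOrd_le {a C : ℝ} (hC : 0 < C) {ω : PathSpace}
    (h : ∀ᶠ ε in 𝓝[>] (0:ℝ), (μ (ball ω ε)).toReal < 1 ∧
      Real.exp (-(C * ε ^ (-a))) ≤ (μ (ball ω ε)).toReal) :
    upperLocOrd μ ω ≤ (a : EReal) := by
  have h1 := (continuous_coe_real_ereal.tendsto a).comp (tendsto_add_log_div_neg_log a C)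
  rw [← h1.limsup_eq]
  refine limsup_le_limsup ?_
  filter_upwards [h, Ioo_mem_nhdsGT one_pos] with ε hε hε1
  exact EReal.coe_le_coe_iff.mpr (log_neg_log_div_le hC hε1.1 hε1.2 hε.1 hε.2)

end LocalOrder

/-- For `W^H`-almost every path `ω̄`, the local order of `W^H` at `ω̄` exists and
equals `1/H`. -/
theorem fbm_local_order (H : ℝ) (hH : H ∈ Set.Ioo (0:ℝ) 1)
    (WH : Measure PathSpace) (hWH : IsFBM H WH) :
    ∀ᵐ ωb ∂WH, lowerLocOrd WH ωb = ((H⁻¹ : ℝ) : EReal) ∧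
      upperLocOrd WH ωb = ((H⁻¹ : ℝ) : EReal) := by
  obtain ⟨C, hC, hup⟩ := hWH.exists_measure_ball_le_exp hH
  obtain ⟨a, -, haH, ha⟩ := exists_seq_strictMono_tendsto' hH.1
  have hlow := ae_all_iff.mpr fun n => hWH.ae_exists_exp_le_measure_ball (haH n)
  have hlim : Tendsto (fun n => (((a n)⁻¹ : ℝ) : EReal)) atTop (𝓝 ((H⁻¹ : ℝ) : EReal)) :=
    (continuous_coe_real_ereal.tendsto _).comp (ha.inv₀ hH.1.ne')
  filter_upwards [hlow] with ω hω
  have h1 : ((H⁻¹ : ℝ) : EReal) ≤ lowerLocOrd WH ω := by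
    obtain ⟨D, -, hD⟩ := hω 0
    refine le_lowerLocOrd hC ?_
    filter_upwards [hup, hD] with ε hε hε'
    exact ⟨(Real.exp_pos _).trans_le hε', hε ω⟩
  have h2 : upperLocOrd WH ω ≤ ((H⁻¹ : ℝ) : EReal) := by
    refine ge_of_tendsto' hlim fun n => ?_
    obtain ⟨D, hD0, hD⟩ := hω n
    refine upperLocOrd_le hD0 ?_
    filter_upwards [hup, hD, self_mem_nhdsWithin] with ε hε hε' hε0
    have hε0' : (0:ℝ) < ε := hε0
    refine ⟨(hε ω).trans_lt (Real.exp_lt_one_iff.mpr (neg_lt_zero.mpr (by positivity))), hε'⟩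
  have h3 : lowerLocOrd WH ω ≤ upperLocOrd WH ω := liminf_le_limsup
  exact ⟨le_antisymm (h3.trans h2) h1, le_antisymm h2 (h1.trans h3)⟩

end Multifractal
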